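/- For every n ≥ 2, the number of transversals π of Y_n that avoid (312) in Y_n but contain (312) as a classical pattern (i.e. there exist positions i_1 < i_2 < i_3 with π(i_2) < π(i_3) < π(i_1)) equals c_n − 2c_{n−1}. -/

import Mathlib

/-!
The cell of the square missing from `Y_n` lies in the lowest row and the last column. A transversal
of `Y_n` is thus a permutation, written as a word in the letters `0, …, n - 1`, which does not end
in `0`; it avoids `312` in `Y_n` if and only if each occurrence of `312` has `0` as its lowest
letter and ends in the last letter of the word.

Write such a word as `A 0 B v` and move its last letter in front of the `0`. If `312` does occur,
then some letter of `A` exceeds `v`. As `A 0 B` avoids `312`, no letter of `A` exceeds one of `B`,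
so neither does `v`, and `A v 0 B` avoids `312`. In this way the words to be counted correspond to
the `312`-avoiders `C 0 B` in which `C` is nonempty and does not end in its maximum.

All `312`-avoiders `C 0 B` together are counted by `c_n = ∑ c_i c_j`, where `i` and `j` are the
lengths of `C` and `B`. Those with `C` empty number `c_{n-1}`. Those with `C` ending in its maximum
number `∑ c_{i-1} c_j = c_{n-1}`, as deleting a final maximum leaves an arbitrary avoider.
-/

open Equiv

/-- `π` is a transversal of the Young diagram with row lengths `b` (zero-indexed:
the row at height `h` has `b h` cells, i.e. column `i` (1-indexed `i+1`) lies in that row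
iff `(i:ℕ)+1 ≤ b h`). -/
def IsTransversal {n : ℕ} (b : Fin n → ℕ) (π : Equiv.Perm (Fin n)) : Prop :=
  ∀ i : Fin n, (i : ℕ) + 1 ≤ b (π i)

/-- The transversal `π` contains the pattern `τ` inside the Young diagram `b`:
there are columns `f 0 < f 1 < …` whose dots are in the relative order prescribed by `τ`
and all rows and columns through these dots intersect inside the diagram. -/
def ContainsIn {n k : ℕ} (b : Fin n → ℕ) (π : Equiv.Perm (Fin n))
    (τ : Equiv.Perm (Fin k)) : Prop :=
  ∃ f : Fin k → Fin n, StrictMono f ∧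
    (∀ s t : Fin k, τ s < τ t ↔ π (f s) < π (f t)) ∧
    (∀ s t : Fin k, (f s : ℕ) + 1 ≤ b (π (f t)))

/-- `|S_Y(τ)|`: the number of transversals of the Young diagram `b` avoiding `τ` in `Y`. -/
noncomputable def SYcard {n k : ℕ} (b : Fin n → ℕ) (τ : Equiv.Perm (Fin k)) : ℕ :=
  Nat.card {π : Equiv.Perm (Fin n) // IsTransversal b π ∧ ¬ ContainsIn b π τ}

/-- Classical pattern containment for permutations. -/
def ContainsPat {n k : ℕ} (π : Equiv.Perm (Fin n)) (τ : Equiv.Perm (Fin k)) : Prop :=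
  ∃ f : Fin k → Fin n, StrictMono f ∧ ∀ s t : Fin k, τ s < τ t ↔ π (f s) < π (f t)

/-- `|S_n(τ)|`: the number of permutations of length `n` avoiding `τ`. -/
noncomputable def SnCard (n : ℕ) {k : ℕ} (τ : Equiv.Perm (Fin k)) : ℕ :=
  Nat.card {π : Equiv.Perm (Fin n) // ¬ ContainsPat π τ}

def p123 : Equiv.Perm (Fin 3) := Equiv.refl _
def p213 : Equiv.Perm (Fin 3) :=
  ⟨![1, 0, 2], ![1, 0, 2], by intro x; fin_cases x <;> rfl, by intro x; fin_cases x <;> rfl⟩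
def p312 : Equiv.Perm (Fin 3) :=
  ⟨![2, 0, 1], ![1, 2, 0], by intro x; fin_cases x <;> rfl, by intro x; fin_cases x <;> rfl⟩
def p321 : Equiv.Perm (Fin 3) :=
  ⟨![2, 1, 0], ![2, 1, 0], by intro x; fin_cases x <;> rfl, by intro x; fin_cases x <;> rfl⟩

/-- `(σ|τ)`: the block sum with the block of `σ` before and entirely above the block of `τ`. -/
def blockSum {m k : ℕ} (σ : Equiv.Perm (Fin m)) (τ : Equiv.Perm (Fin k)) :
    Equiv.Perm (Fin (m + k)) :=
  finSumFinEquiv.symm.trans ((((Equiv.sumCongr σ τ).trans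
    (Equiv.sumComm (Fin m) (Fin k))).trans finSumFinEquiv).trans
    (finCongr (Nat.add_comm k m)))

/-- `|S_{↘Y}(τ)|`: avoiders whose two leftmost entries are decreasing. -/
noncomputable def SYcardLeftDesc {m k : ℕ} (b : Fin m → ℕ) (τ : Equiv.Perm (Fin k)) : ℕ :=
  Nat.card {π : Equiv.Perm (Fin m) // IsTransversal b π ∧ ¬ ContainsIn b π τ ∧
    ∀ i j : Fin m, (i : ℕ) = 0 → (j : ℕ) = 1 → π j < π i}

/-- `|S_{↗Y}(τ)|`: avoiders whose two leftmost entries are increasing. -/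
noncomputable def SYcardLeftAsc {m k : ℕ} (b : Fin m → ℕ) (τ : Equiv.Perm (Fin k)) : ℕ :=
  Nat.card {π : Equiv.Perm (Fin m) // IsTransversal b π ∧ ¬ ContainsIn b π τ ∧
    ∀ i j : Fin m, (i : ℕ) = 0 → (j : ℕ) = 1 → π i < π j}

/-- `|S^{↘}_Y(τ)|`: avoiders in which the value `m` occurs to the left of the value `m-1`. -/
noncomputable def SYcardTopDesc {m k : ℕ} (b : Fin m → ℕ) (τ : Equiv.Perm (Fin k)) : ℕ :=
  Nat.card {π : Equiv.Perm (Fin m) // IsTransversal b π ∧ ¬ ContainsIn b π τ ∧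
    ∀ u v : Fin m, (u : ℕ) + 1 = m → (v : ℕ) + 2 = m → π⁻¹ u < π⁻¹ v}

/-- `|S^{↗}_Y(τ)|`: avoiders in which the value `m-1` occurs to the left of the value `m`. -/
noncomputable def SYcardTopAsc {m k : ℕ} (b : Fin m → ℕ) (τ : Equiv.Perm (Fin k)) : ℕ :=
  Nat.card {π : Equiv.Perm (Fin m) // IsTransversal b π ∧ ¬ ContainsIn b π τ ∧
    ∀ u v : Fin m, (u : ℕ) + 1 = m → (v : ℕ) + 2 = m → π⁻¹ v < π⁻¹ u}

/-- The Young diagram `Y_n`: the square `M_n` minus its bottom-right cell. -/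
def bYn (n : ℕ) : Fin n → ℕ := fun y => if (y : ℕ) = 0 then n - 1 else n

section Pattern

variable {α : Type*} [LT α]

/-- The three letters `x y z`, in this order, form an occurrence of the pattern `312`. -/
def Is312 (x y z : α) : Prop := y < z ∧ z < x

/-- The word `l` avoids the classical pattern `312`. -/
def Avoids312 (l : List α) : Prop := l.Triplewise fun x y z => ¬ Is312 x y z

/-- The word `w v` contains `312`, but all occurrences have lowest letter `s` and end in the final
letter `v`. With `s = 0`, these are the occurrences which the missing corner of `Y_n` destroys. -/
structure Only312AtCorner (s : α) (w : List α) (v : α) : Prop where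
  avoids : Avoids312 w
  lowest_eq : w.Pairwise fun x y => Is312 x y v → y = s
  contains : ¬ w.Pairwise fun x y => ¬ Is312 x y v

theorem avoids312_append_singleton {l : List α} {v : α} :
    Avoids312 (l ++ [v]) ↔ Avoids312 l ∧ l.Pairwise fun x y => ¬ Is312 x y v := by
  simp [Avoids312, List.triplewise_append]

theorem avoids312_ofFn {n : ℕ} {f : Fin n → α} :
    Avoids312 (List.ofFn f) ↔ ∀ i j k, i < j → j < k → ¬ Is312 (f i) (f j) (f k) := by
  simp only [Avoids312, List.triplewise_iff_getElem, List.length_ofFn, List.getElem_ofFn]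
  exact ⟨fun h i j k hij hjk => h i j k hij hjk k.isLt,
    fun h i j k hij hjk hk => h ⟨i, _⟩ ⟨j, _⟩ ⟨k, hk⟩ hij hjk⟩

theorem only312AtCorner_ofFn {n : ℕ} {f : Fin (n + 1) → α} {s : α} :
    Only312AtCorner s (List.ofFn fun i : Fin n => f i.castSucc) (f (Fin.last n)) ↔
      (∀ i j k, i < j → j < k → Is312 (f i) (f j) (f k) → f j = s ∧ k = Fin.last n) ∧
        ∃ i j k, i < j ∧ j < k ∧ Is312 (f i) (f j) (f k) := by
  constructor
  · rintro ⟨havoid, hlowest, hcontains⟩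
    rw [avoids312_ofFn] at havoid
    rw [List.pairwise_ofFn] at hlowest hcontains
    push Not at hcontains
    obtain ⟨i, j, hij, h⟩ := hcontains
    refine ⟨fun i j k hij hjk h => ?_, i.castSucc, j.castSucc, _, hij, j.castSucc_lt_last, h⟩
    obtain ⟨j, rfl⟩ := Fin.exists_castSucc_eq.2 (Fin.ne_last_of_lt hjk)
    obtain ⟨i, rfl⟩ := Fin.exists_castSucc_eq.2 (Fin.ne_last_of_lt hij)
    rcases Fin.eq_castSucc_or_eq_last k with ⟨k, rfl⟩ | rfl
    · exact absurd h (havoid i j k hij hjk)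
    · exact ⟨hlowest hij h, rfl⟩
  · rintro ⟨honly, i, j, k, hij, hjk, h⟩
    refine ⟨avoids312_ofFn.2 fun i j k hij hjk h => ?_, List.pairwise_ofFn.2 fun i j hij h => ?_,
      fun hnone => ?_⟩
    · exact (Fin.castSucc_lt_last k).ne (honly _ _ _ hij hjk h).2
    · exact (honly _ _ _ hij (Fin.castSucc_lt_last j) h).1
    · obtain ⟨-, rfl⟩ := honly i j k hij hjk h
      obtain ⟨j, rfl⟩ := Fin.exists_castSucc_eq.2 hjk.ne
      obtain ⟨i, rfl⟩ := Fin.exists_castSucc_eq.2 (Fin.ne_last_of_lt hij)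
      exact List.pairwise_ofFn.1 hnone hij h

end Pattern

section LinearOrder

variable {α : Type*} [LinearOrder α] {A B : List α} {s v : α}

theorem avoids312_append_cons_iff (hs : ∀ x ∈ A ++ B, s < x) :
    Avoids312 (A ++ s :: B) ↔ Avoids312 A ∧ Avoids312 B ∧ ∀ a ∈ A, ∀ b ∈ B, a ≤ b := by
  simp only [List.mem_append] at hs
  simp only [Avoids312, List.triplewise_append, List.triplewise_cons, List.pairwise_cons]
  constructor
  · rintro ⟨hA, ⟨-, hB⟩, hAsB, -⟩
    exact ⟨hA, hB, fun a ha b hb => not_lt.1 fun hba => (hAsB a ha).1 b hb ⟨hs b (.inr hb), hba⟩⟩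
  · rintro ⟨hA, hB, hAB⟩
    have no312 {x y z : α} (h : z ≤ y ∨ x ≤ z) : ¬ Is312 x y z :=
      fun ⟨hyz, hzx⟩ => h.elim hyz.not_ge hzx.not_ge
    refine ⟨hA, ⟨?_, hB⟩, fun a ha => ⟨fun b hb => no312 (.inr (hAB a ha b hb)), ?_⟩,
      fun z hz => ?_⟩
    · exact List.pairwise_of_forall_mem_list fun x _ y hy => no312 (.inr (hs y (.inr hy)).le)
    · exact List.pairwise_of_forall_mem_list fun x _ y hy => no312 (.inr (hAB a ha y hy))
    · refine List.pairwise_of_forall_mem_list fun x hx y hy => no312 ?_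
      rcases List.mem_cons.1 hz with rfl | hz
      · exact .inl (hs y (.inl hy)).le
      · exact .inr (hAB x hx z hz)

theorem pairwise_not_is312_append_cons_iff (hv : s < v) :
    (A ++ s :: B).Pairwise (fun x y => ¬ Is312 x y v) ↔
      (A ++ B).Pairwise (fun x y => ¬ Is312 x y v) ∧ ∀ a ∈ A, a ≤ v := by
  have hstart (y : α) : ¬ Is312 s y v := fun h => hv.not_gt h.2
  have hlowest (x : α) : ¬ Is312 x s v ↔ x ≤ v := by simp [Is312, hv]
  simp only [List.pairwise_append, List.pairwise_cons, List.forall_mem_cons, hstart, hlowest]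
  grind

theorem pairwise_is312_imp_eq_append_cons_iff (hs : ∀ x ∈ A ++ B, s < x) (hv : s < v) :
    (A ++ s :: B).Pairwise (fun x y => Is312 x y v → y = s) ↔
      (A ++ B).Pairwise (fun x y => ¬ Is312 x y v) := by
  have hstart (y : α) : ¬ Is312 s y v := fun h => hv.not_gt h.2
  trans (A ++ B).Pairwise fun x y => Is312 x y v → y = s
  · simp [List.pairwise_append, hstart]
  · exact List.Pairwise.iff_of_mem fun _ hy => by simp [(hs _ hy).ne']

theorem only312AtCorner_append_cons_iff (hs : ∀ x ∈ A ++ B, s < x) (hv : s < v) :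
    Only312AtCorner s (A ++ s :: B) v ↔ Avoids312 (A ++ v :: s :: B) ∧ ∃ a ∈ A, v < a := by
  have hs' : ∀ x ∈ (A ++ [v]) ++ B, s < x := by grind
  rw [List.append_cons A v, avoids312_append_cons_iff hs', avoids312_append_singleton]
  constructor
  · rintro ⟨havoid, hlowest, hcontains⟩
    rw [avoids312_append_cons_iff hs] at havoid
    rw [pairwise_is312_imp_eq_append_cons_iff hs hv] at hlowest
    rw [pairwise_not_is312_append_cons_iff hv] at hcontains
    obtain ⟨hA, hB, hAB⟩ := havoid
    obtain ⟨a, ha, hva⟩ : ∃ a ∈ A, v < a := by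
      simpa using not_and.1 hcontains hlowest
    refine ⟨⟨⟨hA, (List.pairwise_append.1 hlowest).1⟩, hB, ?_⟩, a, ha, hva⟩
    simp only [List.mem_append, List.mem_singleton]
    rintro x (hx | rfl) b hb
    · exact hAB x hx b hb
    · exact hva.le.trans (hAB a ha b hb)
  · rintro ⟨⟨⟨hA, hAv⟩, hB, hAvB⟩, a, ha, hva⟩
    refine ⟨(avoids312_append_cons_iff hs).2 ⟨hA, hB, fun x hx => hAvB x (by simp [hx])⟩, ?_, ?_⟩
    · rw [pairwise_is312_imp_eq_append_cons_iff hs hv, List.pairwise_append]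
      have hvB (x : α) : ∀ y ∈ B, ¬ Is312 x y v := fun y hy h => (hAvB v (by simp) y hy).not_gt h.1
      exact ⟨hAv, List.pairwise_of_forall_mem_list fun x _ => hvB x, fun x _ => hvB x⟩
    · rw [pairwise_not_is312_append_cons_iff hv]
      exact fun h => (h.2 a ha).not_gt hva

end LinearOrder

theorem takeWhile_ne_append_cons {α : Type*} [DecidableEq α] {A B : List α} {s : α}
    (hs : s ∉ A) : (A ++ s :: B).takeWhile (· ≠ s) = A := by
  rw [List.takeWhile_append_of_pos fun a ha => decide_eq_true (ne_of_mem_of_not_mem ha hs)]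
  simp

theorem eq_and_eq_of_append_cons_eq {α : Type*} {A B A' B' : List α} {s : α} (hs : s ∉ A)
    (hs' : s ∉ A') (h : A ++ s :: B = A' ++ s :: B') : A = A' ∧ B = B' := by
  classical
  obtain rfl : A = A' := by
    rw [← takeWhile_ne_append_cons (B := B) hs, h, takeWhile_ne_append_cons hs']
  exact ⟨rfl, List.tail_eq_of_cons_eq (List.append_cancel_left h)⟩

section Intervals

variable {A B l : List ℕ} {s p q : ℕ}

theorem mem_iff_of_perm_range' (h : l.Perm (List.range' s p)) {x : ℕ} :
    x ∈ l ↔ s ≤ x ∧ x < s + p := by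
  rw [h.mem_iff, List.mem_range'_1]

theorem perm_range'_append_iff (hA : A.length = p) (hAB : ∀ a ∈ A, ∀ b ∈ B, a ≤ b) :
    (A ++ B).Perm (List.range' s (p + q)) ↔
      A.Perm (List.range' s p) ∧ B.Perm (List.range' (s + p) q) := by
  rw [← List.range'_append_1]
  refine ⟨fun h => ?_, fun h => h.1.append h.2⟩
  have hsort (l : List ℕ) : (l.mergeSort (· ≤ ·)).Perm l := List.mergeSort_perm l _
  have hsorted : (A.mergeSort (· ≤ ·) ++ B.mergeSort (· ≤ ·)).Pairwise (· ≤ ·) := by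
    refine List.pairwise_append.2 ⟨List.pairwise_mergeSort' _ A, List.pairwise_mergeSort' _ B, ?_⟩
    exact fun a ha b hb => hAB a ((hsort A).mem_iff.1 ha) b ((hsort B).mem_iff.1 hb)
  have hrange : (List.range' s p ++ List.range' (s + p) q).Pairwise (· ≤ ·) := by
    rw [List.range'_append_1]
    exact (List.pairwise_lt_range' 1).imp le_of_lt
  have heq := (((hsort A).append (hsort B)).trans h).eq_of_pairwise' hsorted hrange
  obtain ⟨hA', hB'⟩ := List.append_inj heq (by simp [hA])
  exact ⟨hA' ▸ (hsort A).symm, hB' ▸ (hsort B).symm⟩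

theorem perm_range'_append_cons_iff {n : ℕ} :
    (A ++ s :: B).Perm (List.range' s (n + 1)) ↔ (A ++ B).Perm (List.range' (s + 1) n) := by
  rw [List.range'_succ]
  exact ⟨fun h => (List.perm_middle.symm.trans h).cons_inv,
    fun h => List.perm_middle.trans (h.cons s)⟩

end Intervals

section Counting

open _root_.Finset hiding antidiagonal mem_antidiagonal
open _root_.Finset.HasAntidiagonal (antidiagonal mem_antidiagonal)

open Classical in
/-- The `312`-avoiding words whose letters are `s, s + 1, …, s + n - 1`, each used once. -/
noncomputable def avoiders (s n : ℕ) : Finset (List ℕ) :=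
  {l ∈ (List.range' s n).permutations.toFinset | Avoids312 l}

theorem mem_avoiders {s n : ℕ} {l : List ℕ} :
    l ∈ avoiders s n ↔ l.Perm (List.range' s n) ∧ Avoids312 l := by
  simp [avoiders]

theorem avoiders_zero (s : ℕ) : avoiders s 0 = {[]} := by
  ext l
  simp +contextual [mem_avoiders, Avoids312]

theorem length_of_mem_avoiders {s n : ℕ} {l : List ℕ} (h : l ∈ avoiders s n) : l.length = n := by
  simpa using (mem_avoiders.1 h).1.length_eq

theorem lt_of_mem_avoiders {s n : ℕ} {l : List ℕ} (h : l ∈ avoiders (s + 1) n) {x : ℕ}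
    (hx : x ∈ l) : s < x :=
  ((mem_iff_of_perm_range' (mem_avoiders.1 h).1).1 hx).1

theorem append_cons_mem_avoiders_iff {s n : ℕ} {A B : List ℕ} :
    A ++ s :: B ∈ avoiders s (n + 1) ↔ A.length + B.length = n ∧
      A ∈ avoiders (s + 1) A.length ∧ B ∈ avoiders (s + 1 + A.length) B.length := by
  simp only [mem_avoiders, perm_range'_append_cons_iff]
  constructor
  · rintro ⟨hAB, havoid⟩
    have hs : ∀ x ∈ A ++ B, s < x := fun x hx => ((mem_iff_of_perm_range' hAB).1 hx).1
    obtain ⟨hA, hB, hle⟩ := (avoids312_append_cons_iff hs).1 havoid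
    obtain rfl : A.length + B.length = n := by simpa using hAB.length_eq
    obtain ⟨hpA, hpB⟩ := (perm_range'_append_iff rfl hle).1 hAB
    exact ⟨rfl, ⟨hpA, hA⟩, hpB, hB⟩
  · rintro ⟨rfl, ⟨hpA, hA⟩, hpB, hB⟩
    have hle : ∀ a ∈ A, ∀ b ∈ B, a ≤ b := fun a ha b hb =>
      ((mem_iff_of_perm_range' hpA).1 ha).2.le.trans ((mem_iff_of_perm_range' hpB).1 hb).1
    have hAB := (perm_range'_append_iff rfl hle).2 ⟨hpA, hpB⟩
    have hs : ∀ x ∈ A ++ B, s < x := fun x hx => ((mem_iff_of_perm_range' hAB).1 hx).1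
    exact ⟨hAB, (avoids312_append_cons_iff hs).2 ⟨hA, hB, hle⟩⟩

open Classical in
theorem card_avoiders_filter_takeWhile (s n : ℕ) (P : List ℕ → Prop) :
    #{l ∈ avoiders s (n + 1) | P (l.takeWhile (· ≠ s))} =
      ∑ ij ∈ antidiagonal n,
        #{A ∈ avoiders (s + 1) ij.1 | P A} * #(avoiders (s + 1 + ij.1) ij.2) := by
  have hs {i : ℕ} {A : List ℕ} (hA : A ∈ avoiders (s + 1) i) : s ∉ A := fun h =>
    (lt_of_mem_avoiders hA h).false
  simp only [← card_product, ← card_sigma]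
  symm
  refine card_nbij (fun x => x.2.1 ++ s :: x.2.2) ?_ ?_ ?_
  · rintro ⟨⟨i, j⟩, A, B⟩ h
    simp only [coe_sigma, Set.mem_sigma_iff, mem_coe, mem_antidiagonal, mem_product, mem_filter]
      at h
    obtain ⟨rfl, ⟨hA, hP⟩, hB⟩ := h
    rw [mem_coe, mem_filter, takeWhile_ne_append_cons (hs hA), append_cons_mem_avoiders_iff]
    obtain rfl := length_of_mem_avoiders hA
    obtain rfl := length_of_mem_avoiders hB
    exact ⟨⟨rfl, hA, hB⟩, hP⟩
  · rintro ⟨⟨i, j⟩, A, B⟩ h ⟨⟨i', j'⟩, A', B'⟩ h' heq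
    simp only [coe_sigma, Set.mem_sigma_iff, mem_coe, mem_antidiagonal, mem_product, mem_filter]
      at h h'
    obtain ⟨rfl, ⟨hA, -⟩, hB⟩ := h
    obtain ⟨-, ⟨hA', -⟩, hB'⟩ := h'
    obtain ⟨rfl, rfl⟩ := eq_and_eq_of_append_cons_eq (hs hA) (hs hA') heq
    obtain rfl := length_of_mem_avoiders hA
    obtain rfl := length_of_mem_avoiders hB
    obtain rfl := length_of_mem_avoiders hA'
    obtain rfl := length_of_mem_avoiders hB'
    rfl
  · intro l hl
    obtain ⟨hl, hP⟩ := mem_filter.1 hl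
    have hsl : s ∈ l := (mem_iff_of_perm_range' (mem_avoiders.1 hl).1).2 (by omega)
    obtain ⟨A, B, rfl, hsA⟩ := List.eq_append_cons_of_mem hsl
    rw [takeWhile_ne_append_cons hsA] at hP
    obtain ⟨hlen, hA, hB⟩ := append_cons_mem_avoiders_iff.1 hl
    exact ⟨⟨(A.length, B.length), A, B⟩, by simp [hlen, hA, hB, hP], rfl⟩

theorem card_avoiders (s n : ℕ) : #(avoiders s n) = catalan n := by
  induction n using Nat.strong_induction_on generalizing s with
  | _ n ih =>
    cases n with
    | zero => simp [avoiders_zero]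
    | succ n =>
      have hsplit := card_avoiders_filter_takeWhile s n fun _ => True
      simp only [filter_true] at hsplit
      rw [hsplit, catalan_succ']
      refine sum_congr rfl fun ij hij => ?_
      have hn := mem_antidiagonal.1 hij
      rw [ih _ (by omega), ih _ (by omega)]

/-- No letter of `l` exceeds the last one; this holds vacuously for the empty word. -/
def EndsInMax {α : Type*} [LE α] (l : List α) : Prop := ∀ v ∈ l.getLast?, ∀ a ∈ l, a ≤ v

theorem endsInMax_append_singleton_iff {α : Type*} [Preorder α] {A : List α} {v : α} :
    EndsInMax (A ++ [v]) ↔ ∀ a ∈ A, a ≤ v := by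
  simp [EndsInMax, or_imp, forall_and]

theorem append_singleton_mem_avoiders_iff {s n : ℕ} {A : List ℕ} :
    A ++ [s + n] ∈ avoiders s (n + 1) ↔ A ∈ avoiders s n := by
  rw [mem_avoiders, mem_avoiders, List.range'_1_concat, List.perm_append_right_iff,
    avoids312_append_singleton]
  refine and_congr_right fun hA => and_iff_left_of_imp fun _ => ?_
  refine List.pairwise_of_forall_mem_list fun x hx _ _ h => ?_
  exact h.2.not_gt ((mem_iff_of_perm_range' hA).1 hx).2

open Classical in
theorem card_avoiders_filter_endsInMax (s n : ℕ) :
    #{A ∈ avoiders s (n + 1) | EndsInMax A} = catalan n := by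
  rw [← card_avoiders s n,
    ← card_image_of_injective (avoiders s n) (List.append_left_injective [s + n])]
  congr 1
  ext l
  rw [mem_filter, mem_image]
  constructor
  · rintro ⟨hl, hmax⟩
    have hmem {x : ℕ} := mem_iff_of_perm_range' (mem_avoiders.1 hl).1 (x := x)
    have hne : l ≠ [] := List.ne_nil_of_mem (hmem.2 ⟨le_rfl, by omega⟩)
    obtain ⟨A, v, rfl⟩ := (List.eq_nil_or_concat' l).resolve_left hne
    rw [endsInMax_append_singleton_iff] at hmax
    obtain rfl : v = s + n := by
      have hlt : v < s + (n + 1) := (hmem.1 (by simp)).2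
      rcases List.mem_append.1 (hmem.2 ⟨Nat.le_add_right s n, by omega⟩) with htop | htop
      · exact (Nat.lt_succ_iff.1 hlt).antisymm (hmax _ htop)
      · exact (List.mem_singleton.1 htop).symm
    exact ⟨A, append_singleton_mem_avoiders_iff.1 hl, rfl⟩
  · rintro ⟨A, hA, rfl⟩
    exact ⟨append_singleton_mem_avoiders_iff.2 hA, endsInMax_append_singleton_iff.2 fun a ha =>
      ((mem_iff_of_perm_range' (mem_avoiders.1 hA).1).1 ha).2.le⟩

open Classical in
/-- The `312`-avoiding words `A v s B` on the letters `s, …, s + n - 1` in which the letter `v` in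
front of the least letter `s` is not the maximum of `A v`. -/
noncomputable def avoidersNonmax (s n : ℕ) : Finset (List ℕ) :=
  {l ∈ avoiders s n | ¬ EndsInMax (l.takeWhile (· ≠ s))}

theorem mem_avoidersNonmax {s n : ℕ} {l : List ℕ} :
    l ∈ avoidersNonmax s n ↔ l ∈ avoiders s n ∧ ¬ EndsInMax (l.takeWhile (· ≠ s)) := by
  simp only [avoidersNonmax, mem_filter]

theorem card_avoidersNonmax (s n : ℕ) :
    #(avoidersNonmax s (n + 2)) = catalan (n + 2) - 2 * catalan (n + 1) := by
  classical
  have hnil : #{A ∈ avoiders (s + 1) 0 | EndsInMax A} = 1 := by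
    simp [avoiders_zero, filter_singleton, EndsInMax]
  have hmax :
      #{l ∈ avoiders s (n + 2) | EndsInMax (l.takeWhile (· ≠ s))} = 2 * catalan (n + 1) := by
    rw [card_avoiders_filter_takeWhile, Finset.Nat.sum_antidiagonal_succ]
    simp only [hnil, card_avoiders_filter_endsInMax, card_avoiders, ← catalan_succ']
    ring
  rw [avoidersNonmax, filter_not, card_sdiff_of_subset (filter_subset _ _), hmax, card_avoiders]

end Counting

section Insertion

/-- The word obtained from `w` by inserting the letter `v` just before the first occurrence of `s`,
or at the end if there is none. The bijection `A s B v ↦ A v s B` applies it to `A s B` and `v`. -/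
def insertBefore {α : Type*} [DecidableEq α] (s v : α) (w : List α) : List α :=
  w.takeWhile (· ≠ s) ++ v :: w.dropWhile (· ≠ s)

theorem insertBefore_append_cons {α : Type*} [DecidableEq α] {A B : List α} {s v : α}
    (hs : s ∉ A) : insertBefore s v (A ++ s :: B) = A ++ v :: s :: B := by
  have hdrop : (A ++ s :: B).dropWhile (· ≠ s) = s :: B := by
    rw [List.dropWhile_append_of_pos fun a ha => decide_eq_true (ne_of_mem_of_not_mem ha hs)]
    simp
  rw [insertBefore, takeWhile_ne_append_cons hs, hdrop]

theorem eq_and_eq_of_insertBefore_eq {α : Type*} [DecidableEq α] {w w' : List α} {s v v' : α}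
    (hw : s ∈ w) (hw' : s ∈ w') (hv : v ≠ s) (hv' : v' ≠ s)
    (h : insertBefore s v w = insertBefore s v' w') : w = w' ∧ v = v' := by
  obtain ⟨A, B, rfl, hA⟩ := List.eq_append_cons_of_mem hw
  obtain ⟨A', B', rfl, hA'⟩ := List.eq_append_cons_of_mem hw'
  rw [insertBefore_append_cons hA, insertBefore_append_cons hA', List.append_cons,
    List.append_cons A'] at h
  obtain ⟨hAv, rfl⟩ := eq_and_eq_of_append_cons_eq (by simp [hA, hv.symm])
    (by simp [hA', hv'.symm]) h
  obtain ⟨rfl, hvv'⟩ := List.append_inj' hAv rfl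
  exact ⟨rfl, List.singleton_inj.1 hvv'⟩

variable {w l : List ℕ} {s v n : ℕ}

theorem mem_left_of_perm_range' (h : (w ++ [v]).Perm (List.range' s (n + 1))) (hv : v ≠ s) :
    s ∈ w := by
  have hs : s ∈ w ++ [v] := (mem_iff_of_perm_range' h).2 (by omega)
  simpa [hv.symm] using hs

theorem insertBefore_mem_avoidersNonmax_iff (h : (w ++ [v]).Perm (List.range' s (n + 1)))
    (hv : v ≠ s) :
    insertBefore s v w ∈ avoidersNonmax s (n + 1) ↔ Only312AtCorner s w v := by
  obtain ⟨A, B, rfl, hA⟩ := List.eq_append_cons_of_mem (mem_left_of_perm_range' h hv)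
  have hperm : (A ++ v :: s :: B).Perm (List.range' s (n + 1)) :=
    (List.perm_middle.trans (List.perm_append_singleton v _).symm).trans h
  have hlt : ∀ x ∈ A ++ v :: B, s < x := by
    rw [List.append_cons, perm_range'_append_cons_iff, ← List.append_cons] at hperm
    exact fun x hx => ((mem_iff_of_perm_range' hperm).1 hx).1
  rw [insertBefore_append_cons hA,
    only312AtCorner_append_cons_iff (by grind) (hlt v (by simp)), mem_avoidersNonmax,
    mem_avoiders, and_iff_right hperm, List.append_cons A v,
    takeWhile_ne_append_cons (by simp [hA, hv.symm]), endsInMax_append_singleton_iff]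
  push Not
  rfl

theorem exists_insertBefore_eq (hl : l ∈ avoidersNonmax s (n + 1)) :
    ∃ w v, insertBefore s v w = l ∧ v ≠ s ∧ (w ++ [v]).Perm (List.range' s (n + 1)) := by
  obtain ⟨hl, hmax⟩ := mem_avoidersNonmax.1 hl
  have hperm := (mem_avoiders.1 hl).1
  obtain ⟨C, B, rfl, hC⟩ := List.eq_append_cons_of_mem
    ((mem_iff_of_perm_range' hperm).2 ⟨le_refl s, by omega⟩)
  rw [takeWhile_ne_append_cons hC] at hmax
  obtain ⟨A, v, rfl⟩ := (List.eq_nil_or_concat' C).resolve_left fun hnil => by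
    simp [hnil, EndsInMax] at hmax
  rw [List.mem_append, not_or, List.mem_singleton] at hC
  rw [← List.append_cons] at hperm ⊢
  exact ⟨A ++ s :: B, v, insertBefore_append_cons hC.1, Ne.symm hC.2,
    ((List.perm_append_singleton v _).trans List.perm_middle.symm).trans hperm⟩

end Insertion

section OneLine

variable {n : ℕ}

/-- The one-line notation of a permutation, as a word with letters `0, …, n - 1`. -/
def oneLine (π : Perm (Fin n)) : List ℕ := List.ofFn fun i => (π i : ℕ)

theorem oneLine_injective : Function.Injective (oneLine (n := n)) := fun _ _ h =>
  Equiv.ext fun i => Fin.ext (congrFun (List.ofFn_injective h) i)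

theorem oneLine_perm (π : Perm (Fin n)) : (oneLine π).Perm (List.range' 0 n) := by
  rw [← List.range_eq_range', ← List.map_coe_finRange_eq_range, ← List.ofFn_eq_map]
  exact π.ofFn_comp_perm Fin.val

theorem exists_oneLine_eq {l : List ℕ} (h : l.Perm (List.range' 0 n)) :
    ∃ π : Perm (Fin n), oneLine π = l := by
  obtain rfl : l.length = n := by simpa using h.length_eq
  have hlt (i : Fin l.length) : l.get i < l.length := by
    simpa using (mem_iff_of_perm_range' h).1 (l.get_mem i)
  have hinj : Function.Injective fun i => (⟨l.get i, hlt i⟩ : Fin l.length) := fun i j hij =>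
    (h.nodup_iff.2 List.nodup_range').injective_get (congrArg Fin.val hij)
  exact ⟨Equiv.ofBijective _ (Finite.injective_iff_bijective.1 hinj), List.ofFn_get l⟩

/-- The one-line notation of a permutation without its last letter. -/
def oneLineInit (π : Perm (Fin (n + 1))) : List ℕ := List.ofFn fun i : Fin n => (π i.castSucc : ℕ)

theorem oneLine_eq_init_append_last (π : Perm (Fin (n + 1))) :
    oneLine π = oneLineInit π ++ [(π (Fin.last n) : ℕ)] := by
  rw [oneLine, List.ofFn_succ', List.concat_eq_append, oneLineInit]

theorem card_perm_only312AtCorner (n : ℕ) :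
    Nat.card {π : Perm (Fin (n + 1)) // (π (Fin.last n) : ℕ) ≠ 0 ∧
      Only312AtCorner 0 (oneLineInit π) (π (Fin.last n) : ℕ)} =
        (avoidersNonmax 0 (n + 1)).card := by
  classical
  have hperm (π : Perm (Fin (n + 1))) := oneLine_eq_init_append_last π ▸ oneLine_perm π
  rw [Nat.card_eq_fintype_card, Fintype.card_subtype]
  refine Finset.card_nbij (fun π => insertBefore 0 (π (Fin.last n) : ℕ) (oneLineInit π))
    (fun π hπ => ?_) (fun π hπ σ hσ h => ?_) fun l hl => ?_
  · obtain ⟨hlast, hcorner⟩ := Finset.mem_filter_univ π |>.1 hπ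
    exact (insertBefore_mem_avoidersNonmax_iff (hperm π) hlast).2 hcorner
  · have hlast := (Finset.mem_filter_univ π |>.1 hπ).1
    have hlast' := (Finset.mem_filter_univ σ |>.1 hσ).1
    obtain ⟨hinit, hval⟩ := eq_and_eq_of_insertBefore_eq (mem_left_of_perm_range' (hperm π) hlast)
      (mem_left_of_perm_range' (hperm σ) hlast') hlast hlast' h
    apply oneLine_injective
    rw [oneLine_eq_init_append_last, oneLine_eq_init_append_last, hinit, hval]
  · obtain ⟨w, v, rfl, hv, hwv⟩ := exists_insertBefore_eq hl
    obtain ⟨π, hπ⟩ := exists_oneLine_eq hwv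
    rw [oneLine_eq_init_append_last] at hπ
    obtain ⟨rfl, hlast⟩ := List.append_inj' hπ rfl
    obtain rfl := List.singleton_inj.1 hlast
    have hcorner := (insertBefore_mem_avoidersNonmax_iff hwv hv).1 hl
    exact ⟨π, Finset.mem_filter_univ π |>.2 ⟨hv, hcorner⟩, rfl⟩

end OneLine

section Diagram

variable {n : ℕ}

theorem containsIn_p312_iff {b : Fin n → ℕ} (hb : Monotone b) {π : Perm (Fin n)} :
    ContainsIn b π p312 ↔
      ∃ i j k, i < j ∧ j < k ∧ Is312 (π i) (π j) (π k) ∧ (k : ℕ) + 1 ≤ b (π j) := by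
  constructor
  · rintro ⟨f, hf, hpat, hin⟩
    exact ⟨f 0, f 1, f 2, hf (by decide), hf (by decide),
      ⟨(hpat 1 2).1 (by decide), (hpat 2 0).1 (by decide)⟩, hin 2 1⟩
  · rintro ⟨i, j, k, hij, hjk, ⟨hyz, hzx⟩, hin⟩
    have hyx := hyz.trans hzx
    refine ⟨![i, j, k], ?_, fun s t => ?_, fun s t => ?_⟩
    · simp [Fin.strictMono_iff_lt_succ, Fin.forall_fin_two, hij, hjk]
    · fin_cases s <;> fin_cases t <;>
        simp [p312, hyz, hzx, hyx, hyz.le, hzx.le, hyx.le]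
    · have hcol : ![i, j, k] s ≤ k := by
        fin_cases s
        exacts [(hij.trans hjk).le, hjk.le, le_rfl]
      have hrow : π j ≤ π (![i, j, k] t) := by
        fin_cases t
        exacts [hyx.le, le_rfl, hyz.le]
      exact (Nat.succ_le_succ hcol).trans (hin.trans (hb hrow))

theorem monotone_bYn (n : ℕ) : Monotone (bYn n) := by
  intro x y hxy
  have : (x : ℕ) ≤ y := hxy
  grind [bYn]

theorem succ_le_bYn_iff {k y : Fin (n + 1)} :
    (k : ℕ) + 1 ≤ bYn (n + 1) y ↔ ¬ (y = 0 ∧ k = Fin.last n) := by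
  simp only [bYn, Fin.ext_iff, Fin.val_zero, Fin.val_last]
  grind

theorem isTransversal_bYn_iff {π : Perm (Fin (n + 1))} :
    IsTransversal (bYn (n + 1)) π ↔ π (Fin.last n) ≠ 0 := by
  simp only [IsTransversal, succ_le_bYn_iff]
  exact ⟨fun h h0 => h _ ⟨h0, rfl⟩, fun h i hi => h (hi.2 ▸ hi.1)⟩

theorem not_containsIn_bYn_p312_iff {π : Perm (Fin (n + 1))} :
    ¬ ContainsIn (bYn (n + 1)) π p312 ↔
      ∀ i j k, i < j → j < k → Is312 (π i) (π j) (π k) → π j = 0 ∧ k = Fin.last n := by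
  simp only [containsIn_p312_iff (monotone_bYn _), succ_le_bYn_iff]
  push Not
  grind

theorem only312AtCorner_oneLineInit_iff {π : Perm (Fin (n + 1))} :
    Only312AtCorner 0 (oneLineInit π) (π (Fin.last n) : ℕ) ↔
      ¬ ContainsIn (bYn (n + 1)) π p312 ∧
        ∃ i j k, i < j ∧ j < k ∧ Is312 (π i) (π j) (π k) := by
  rw [oneLineInit, only312AtCorner_ofFn (f := fun i => (π i : ℕ)), not_containsIn_bYn_p312_iff]
  simp only [Is312, Fin.val_fin_lt, Fin.val_eq_zero_iff]

end Diagram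

theorem stmt18 (n : ℕ) (hn : 2 ≤ n) :
    Nat.card {π : Equiv.Perm (Fin n) // IsTransversal (bYn n) π ∧
        ¬ ContainsIn (bYn n) π p312 ∧
        ∃ i₁ i₂ i₃ : Fin n, i₁ < i₂ ∧ i₂ < i₃ ∧ π i₂ < π i₃ ∧ π i₃ < π i₁} =
      catalan n - 2 * catalan (n - 1) := by
  obtain ⟨m, rfl⟩ := Nat.exists_eq_add_of_le' hn
  trans Nat.card {π : Perm (Fin (m + 2)) // (π (Fin.last (m + 1)) : ℕ) ≠ 0 ∧
    Only312AtCorner 0 (oneLineInit π) (π (Fin.last (m + 1)) : ℕ)}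
  · refine Nat.card_congr (Equiv.subtypeEquivRight fun π => ?_)
    rw [isTransversal_bYn_iff, only312AtCorner_oneLineInit_iff, Ne, Ne, Fin.val_eq_zero_iff]
    rfl
  · rw [card_perm_only312AtCorner, card_avoidersNonmax, Nat.add_succ_sub_one]
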